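/- Fix any r ∈ (0, 1/2) and any matrix X₀ ∈ ℝ^{n×p}. Over the set Γ ∩ {w : ‖w‖ ≤ r}, the matrix-valued function w ↦ ∇²g(w; X₀) is L-Lipschitz with respect to the spectral norm, with L ≤ (4 n²/μ²)‖X₀‖_∞³ + (4 n/μ)‖X₀‖_∞² + (8√2 √n/μ)‖X₀‖_∞² + 8 ‖X₀‖_∞. -/

import Mathlib

open MeasureTheory ProbabilityTheory Real Matrix
open scoped RealInnerProductSpace ENNReal NNReal

noncomputable section

/-- The Bernoulli–Gaussian law `BG(θ)`: with probability `θ` a standard Gaussian,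
with probability `1-θ` a point mass at `0`. -/
def bg (θ : ℝ) : Measure ℝ :=
  θ.toNNReal • gaussianReal 0 1 + (1 - θ).toNNReal • Measure.dirac 0

instance bg.instIsFiniteMeasure (θ : ℝ) : IsFiniteMeasure (bg θ) := by
  unfold bg; infer_instance

/-- Law of an `n × p` matrix with i.i.d. `BG(θ)` entries. -/
def bgMatrix (θ : ℝ) (n p : ℕ) : Measure (Fin n → Fin p → ℝ) :=
  Measure.pi fun _ => Measure.pi fun _ => bg θ

/-- Law of a vector in `ℝ^n` with i.i.d. `BG(θ)` entries. -/
def bgVec (θ : ℝ) (n : ℕ) : Measure (Fin n → ℝ) :=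
  Measure.pi fun _ => bg θ

/-- The smooth sparsity surrogate `h_μ(z) = μ log cosh (z/μ)`. -/
def hmu (μ z : ℝ) : ℝ := μ * Real.log (Real.cosh (z / μ))

/-- Reparametrization `q(w) = (w, √(1-‖w‖²))` with `w` in the unit ball of `ℝ^{n-1}`. -/
def qmap (n : ℕ) (w : EuclideanSpace ℝ (Fin (n - 1))) : Fin n → ℝ :=
  fun i => if h : (i : ℕ) < n - 1 then w ⟨i, h⟩ else Real.sqrt (1 - ‖w‖ ^ 2)

/-- `f(q; Y) = (1/p) ∑ₖ h_μ(qᵀ yₖ)`. -/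
def ffun (n p : ℕ) (μ : ℝ) (Y : Matrix (Fin n) (Fin p) ℝ)
    (q : EuclideanSpace ℝ (Fin n)) : ℝ :=
  (p : ℝ)⁻¹ * ∑ k : Fin p, hmu μ (∑ i : Fin n, q i * Y i k)

/-- `g(w; Y) = f(q(w); Y)`. -/
def gfun (n p : ℕ) (μ : ℝ) (Y : Matrix (Fin n) (Fin p) ℝ)
    (w : EuclideanSpace ℝ (Fin (n - 1))) : ℝ :=
  (p : ℝ)⁻¹ * ∑ k : Fin p, hmu μ (∑ i : Fin n, qmap n w i * Y i k)

/-- Gradient `∇g(w; Y)` in `w`. -/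
def gradg (n p : ℕ) (μ : ℝ) (Y : Matrix (Fin n) (Fin p) ℝ)
    (w : EuclideanSpace ℝ (Fin (n - 1))) : EuclideanSpace ℝ (Fin (n - 1)) :=
  gradient (gfun n p μ Y) w

/-- Hessian `∇²g(w; Y)` in `w`, as a continuous linear map. -/
def hessg (n p : ℕ) (μ : ℝ) (Y : Matrix (Fin n) (Fin p) ℝ)
    (w : EuclideanSpace ℝ (Fin (n - 1))) :
    EuclideanSpace ℝ (Fin (n - 1)) →L[ℝ] EuclideanSpace ℝ (Fin (n - 1)) :=
  fderiv ℝ (gradg n p μ Y) w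

/-- The set `Γ = {w : ‖w‖ < √((4n-1)/(4n))}`. -/
def GammaSet (n : ℕ) : Set (EuclideanSpace ℝ (Fin (n - 1))) :=
  {w | ‖w‖ < Real.sqrt ((4 * (n : ℝ) - 1) / (4 * n))}

/-- Spectral (`ℓ²→ℓ²` operator) norm of а matrix. -/
def specNorm {m k : ℕ} (M : Matrix (Fin m) (Fin k) ℝ) : ℝ :=
  ‖LinearMap.toContinuousLinearMap (Matrix.toEuclideanLin M)‖

/-- Largest magnitude of an entry of a matrix. -/
def Minf {m k : ℕ} (M : Matrix (Fin m) (Fin k) ℝ) : ℝ := ⨆ i, ⨆ j, |M i j|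

/-- Condition number: ratio of largest to smallest singular value. -/
def kappa {n : ℕ} (s : Fin n → ℝ) : ℝ := (⨆ i, s i) / (⨅ i, s i)

/-- Signed standard basis vectors `{± e_i}` of `ℝ^n`. -/
def SignedBasis (n : ℕ) : Set (EuclideanSpace ℝ (Fin n)) :=
  {b | ∃ i : Fin n, b = EuclideanSpace.single i (1 : ℝ) ∨ b = -EuclideanSpace.single i (1 : ℝ)}

/-- Set of local minimizers of `f(·; Y)` over the unit sphere `S^{n-1}`. -/
def LocalMins (n p : ℕ) (μ : ℝ) (Y : Matrix (Fin n) (Fin p) ℝ) :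
    Set (EuclideanSpace ℝ (Fin n)) :=
  {q | q ∈ Metric.sphere (0 : EuclideanSpace ℝ (Fin n)) 1 ∧
       IsLocalMinOn (ffun n p μ Y) (Metric.sphere (0 : EuclideanSpace ℝ (Fin n)) 1) q}

/-- Expected objective `E_x[h_μ(q(w)ᵀ x)]` for `x` with i.i.d. `BG(θ)` entries. -/
def Gexp (n : ℕ) (θ μ : ℝ) (w : EuclideanSpace ℝ (Fin (n - 1))) : ℝ :=
  ∫ x, hmu μ (∑ i : Fin n, qmap n w i * x i) ∂(bgVec θ n)

/-!
A column `y` of the data matrix `X₀` splits as `(x, b)`, and `q(w)ᵀ y = ⟪x, w⟫ + b √(1 - ‖w‖²)`.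
The square root has gradient `-γ`, where `γ w = w / √(1 - ‖w‖²)`, so with `v = x - b γ` the Hessian
of `h_μ (q(w)ᵀ y)` is `h_μ'' · v vᵀ - h_μ' · b · Dγ`.

On the ball `‖w‖ ≤ r` write `r² + c² = 1` with `c > 0`, so that `√(1 - ‖w‖²) ≥ c`. There
`‖γ‖ ≤ r / c`, `‖Dγ‖ ≤ 1 / c³`, `Dγ` is `3 r / c⁵`-Lipschitz and `‖v‖ ≤ ‖y‖ / c`. The product rule
for Lipschitz constants, with `‖y‖ ≤ √n ‖X₀‖_∞` and `|b| ≤ ‖X₀‖_∞`, bounds the Lipschitz constant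
on every ball of radius `r < 1`. The pair `(r, c) = (3/5, 4/5)` covers all radii below `1/2`, and
its rational constants lie below the stated ones.
-/

section LipschitzCalculus

variable {F : Type*} [NormedAddCommGroup F] [NormedSpace ℝ F]

lemma norm_smul_sub_smul_le {a a' A A' U U' δ : ℝ} {u u' : F} (ha' : |a'| ≤ A) (hu : ‖u‖ ≤ U)
    (hsub : |a - a'| ≤ A' * δ) (husub : ‖u - u'‖ ≤ U' * δ) :
    ‖a • u - a' • u'‖ ≤ (A' * U + A * U') * δ := by
  have hsplit : a • u - a' • u' = (a - a') • u + a' • (u - u') := by module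
  calc ‖a • u - a' • u'‖ ≤ |a - a'| * ‖u‖ + |a'| * ‖u - u'‖ := by
        rw [hsplit, ← Real.norm_eq_abs, ← Real.norm_eq_abs, ← norm_smul, ← norm_smul]
        exact norm_add_le _ _
    _ ≤ A' * δ * U + A * (U' * δ) :=
        add_le_add (mul_le_mul hsub hu (norm_nonneg u) ((abs_nonneg _).trans hsub))
          (mul_le_mul ha' husub (norm_nonneg _) ((abs_nonneg _).trans ha'))
    _ = (A' * U + A * U') * δ := by ring

lemma norm_inv_smul_sum_le {p : ℕ} {f : Fin p → F} {C : ℝ} (hC : 0 ≤ C) (hf : ∀ k, ‖f k‖ ≤ C) :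
    ‖(p : ℝ)⁻¹ • ∑ k, f k‖ ≤ C := by
  rw [norm_smul, norm_inv, RCLike.norm_natCast]
  refine inv_mul_le_of_le_mul₀ (Nat.cast_nonneg p) hC ?_
  simpa using norm_sum_le_of_le Finset.univ fun k _ => hf k

lemma norm_sub_le_of_hasFDerivAt_of_norm_le {E : Type*} [NormedAddCommGroup E] [NormedSpace ℝ E]
    {f : E → F} {f' : E → E →L[ℝ] F} {r C : ℝ} (hf : ∀ v, ‖v‖ ≤ r → HasFDerivAt f (f' v) v)
    (hbound : ∀ v, ‖v‖ ≤ r → ‖f' v‖ ≤ C) {w w' : E} (hw : ‖w‖ ≤ r) (hw' : ‖w'‖ ≤ r) :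
    ‖f w - f w'‖ ≤ C * ‖w - w'‖ :=
  (convex_closedBall (0 : E) r).norm_image_sub_le_of_norm_hasFDerivWithin_le
    (fun v hv => (hf v (mem_closedBall_zero_iff.1 hv)).hasFDerivWithinAt)
    (fun v hv => hbound v (mem_closedBall_zero_iff.1 hv))
    (mem_closedBall_zero_iff.2 hw') (mem_closedBall_zero_iff.2 hw)

end LipschitzCalculus

section Surrogate

/-- The first derivative `h_μ'(z) = tanh (z / μ)` of the surrogate `hmu`. -/
def hmuDeriv (μ z : ℝ) : ℝ := Real.tanh (z / μ)

/-- The second derivative `h_μ''(z) = (1 - tanh² (z / μ)) / μ` of the surrogate `hmu`. -/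
def hmuDeriv2 (μ z : ℝ) : ℝ := (1 - Real.tanh (z / μ) ^ 2) / μ

lemma hasDerivAt_tanh (x : ℝ) : HasDerivAt Real.tanh (1 - Real.tanh x ^ 2) x := by
  have hquot := (Real.hasDerivAt_sinh x).div (Real.hasDerivAt_cosh x) (Real.cosh_pos x).ne'
  rw [show Real.sinh / Real.cosh = Real.tanh from
    funext fun y => (Real.tanh_eq_sinh_div_cosh y).symm] at hquot
  refine hquot.congr_deriv ?_
  have hcosh := (Real.cosh_pos x).ne'
  rw [Real.tanh_eq_sinh_div_cosh]
  field_simp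

variable {μ : ℝ}

lemma hasDerivAt_hmu (hμ : μ ≠ 0) (z : ℝ) : HasDerivAt (hmu μ) (hmuDeriv μ z) z := by
  refine (((((hasDerivAt_id z).div_const μ).cosh).log (Real.cosh_pos _).ne').const_mul
    μ).congr_deriv ?_
  rw [hmuDeriv, Real.tanh_eq_sinh_div_cosh, id]
  field_simp

lemma hasDerivAt_hmuDeriv (μ z : ℝ) : HasDerivAt (hmuDeriv μ) (hmuDeriv2 μ z) z :=
  ((hasDerivAt_tanh _).comp z ((hasDerivAt_id z).div_const μ)).congr_deriv (mul_one_div _ _)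

lemma abs_hmuDeriv_le_one (μ z : ℝ) : |hmuDeriv μ z| ≤ 1 := (Real.abs_tanh_lt_one _).le

lemma abs_hmuDeriv2_le (hμ : 0 < μ) (z : ℝ) : |hmuDeriv2 μ z| ≤ 1 / μ := by
  have htanh := Real.tanh_sq_lt_one (z / μ)
  rw [hmuDeriv2, abs_div, abs_of_pos hμ, abs_of_pos (sub_pos.2 htanh)]
  gcongr
  linarith [sq_nonneg (Real.tanh (z / μ))]

lemma abs_hmuDeriv_sub_le (hμ : 0 < μ) (s t : ℝ) :
    |hmuDeriv μ s - hmuDeriv μ t| ≤ 1 / μ * |s - t| :=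
  convex_univ.norm_image_sub_le_of_norm_hasDerivWithin_le
    (fun z _ => (hasDerivAt_hmuDeriv μ z).hasDerivWithinAt) (fun z _ => abs_hmuDeriv2_le hμ z)
    (Set.mem_univ t) (Set.mem_univ s)

lemma abs_hmuDeriv2_sub_le (hμ : 0 < μ) (s t : ℝ) :
    |hmuDeriv2 μ s - hmuDeriv2 μ t| ≤ 2 / μ ^ 2 * |s - t| := by
  have hfactor : hmuDeriv2 μ s - hmuDeriv2 μ t
      = -((hmuDeriv μ s + hmuDeriv μ t) * (hmuDeriv μ s - hmuDeriv μ t)) / μ := by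
    simp only [hmuDeriv2, hmuDeriv]
    ring
  have hsum : |hmuDeriv μ s + hmuDeriv μ t| ≤ 2 :=
    (abs_add_le _ _).trans (by linarith [abs_hmuDeriv_le_one μ s, abs_hmuDeriv_le_one μ t])
  calc |hmuDeriv2 μ s - hmuDeriv2 μ t|
      = |hmuDeriv μ s + hmuDeriv μ t| * |hmuDeriv μ s - hmuDeriv μ t| / μ := by
        rw [hfactor, abs_div, abs_neg, abs_mul, abs_of_pos hμ]
    _ ≤ 2 * (1 / μ * |s - t|) / μ := by
        gcongr
        exact abs_hmuDeriv_sub_le hμ s t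
    _ = 2 / μ ^ 2 * |s - t| := by ring

end Surrogate

section Hemisphere

variable {E : Type*} [NormedAddCommGroup E]

/-- The height `√(1 - ‖w‖²)` of the unit upper hemisphere above `w`: the last coordinate of `q(w)`.
Outside the unit ball it is `0`. -/
def hemiHeight (w : E) : ℝ := √(1 - ‖w‖ ^ 2)

lemma hemiHeight_pos {w : E} (hw : ‖w‖ < 1) : 0 < hemiHeight w :=
  Real.sqrt_pos.2 (by nlinarith [norm_nonneg w])

variable {w w' : E} {r c : ℝ}

lemma lt_one_of_sq_add_sq_eq_one (hc : 0 < c) (hrc : r ^ 2 + c ^ 2 = 1) : r < 1 := by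
  nlinarith

lemma le_hemiHeight (hrc : r ^ 2 + c ^ 2 = 1) (hw : ‖w‖ ≤ r) : c ≤ hemiHeight w :=
  Real.le_sqrt_of_sq_le (by nlinarith [norm_nonneg w])

lemma abs_inv_hemiHeight_le (hc : 0 < c) (hrc : r ^ 2 + c ^ 2 = 1) (hw : ‖w‖ ≤ r) :
    |(hemiHeight w)⁻¹| ≤ 1 / c := by
  have hle := le_hemiHeight hrc hw
  rw [abs_of_pos (inv_pos.2 (hc.trans_le hle)), ← one_div]
  exact one_div_le_one_div_of_le hc hle

variable [InnerProductSpace ℝ E]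

/-- The gnomonic coordinate `γ(w) = w / √(1 - ‖w‖²)`, the negative gradient of `hemiHeight`. -/
def gnomonic (w : E) : E := (hemiHeight w)⁻¹ • w

/-- The derivative `(I + γ γᵀ) / √(1 - ‖w‖²)` of the gnomonic coordinate `γ` at `w`. -/
def gnomonicDeriv (w : E) : E →L[ℝ] E :=
  (hemiHeight w)⁻¹ •
    (ContinuousLinearMap.id ℝ E + InnerProductSpace.rankOne ℝ (gnomonic w) (gnomonic w))

lemma hasFDerivAt_hemiHeight (hw : ‖w‖ < 1) :
    HasFDerivAt hemiHeight (-innerSL ℝ (gnomonic w)) w := by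
  have hne : (1 : ℝ) - ‖w‖ ^ 2 ≠ 0 := by nlinarith [norm_nonneg w]
  refine (((hasFDerivAt_id w).norm_sq.const_sub 1).sqrt hne).congr_fderiv ?_
  have hpos := hemiHeight_pos hw
  ext e
  simp only [id, gnomonic, _root_.smul_apply, _root_.neg_apply, ContinuousLinearMap.comp_apply,
    ContinuousLinearMap.id_apply, innerSL_apply_apply, real_inner_smul_left, smul_eq_mul,
    nsmul_eq_mul]
  change 1 / (2 * hemiHeight w) * _ = _
  push_cast
  field_simp

lemma hasFDerivAt_gnomonic (hw : ‖w‖ < 1) : HasFDerivAt gnomonic (gnomonicDeriv w) w := by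
  have hpos := hemiHeight_pos hw
  refine (((hasDerivAt_inv hpos.ne').comp_hasFDerivAt w (hasFDerivAt_hemiHeight hw)).smul
    (hasFDerivAt_id w)).congr_fderiv ?_
  ext1 e
  simp only [gnomonicDeriv, gnomonic, Function.comp, id, _root_.add_apply,
    _root_.smul_apply, ContinuousLinearMap.smulRight_apply,
    _root_.neg_apply, innerSL_apply_apply, InnerProductSpace.rankOne_apply,
    ContinuousLinearMap.id_apply, real_inner_smul_left, smul_eq_mul]
  rw [smul_add, smul_smul, smul_smul]
  congr 2
  field_simp

lemma norm_gnomonic_le (hc : 0 < c) (hrc : r ^ 2 + c ^ 2 = 1) (hw : ‖w‖ ≤ r) :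
    ‖gnomonic w‖ ≤ r / c := by
  rw [gnomonic, norm_smul, Real.norm_eq_abs, ← one_div_mul_eq_div]
  exact mul_le_mul (abs_inv_hemiHeight_le hc hrc hw) hw (norm_nonneg w) (by positivity)

lemma abs_hemiHeight_sub_le (hc : 0 < c) (hrc : r ^ 2 + c ^ 2 = 1) (hw : ‖w‖ ≤ r)
    (hw' : ‖w'‖ ≤ r) : |hemiHeight w - hemiHeight w'| ≤ r / c * ‖w - w'‖ :=
  norm_sub_le_of_hasFDerivAt_of_norm_le
    (fun _ hv => hasFDerivAt_hemiHeight (hv.trans_lt (lt_one_of_sq_add_sq_eq_one hc hrc)))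
    (fun _ hv => by
      rw [norm_neg, innerSL_apply_norm]
      exact norm_gnomonic_le hc hrc hv) hw hw'

lemma abs_inv_hemiHeight_sub_le (hc : 0 < c) (hrc : r ^ 2 + c ^ 2 = 1) (hw : ‖w‖ ≤ r)
    (hw' : ‖w'‖ ≤ r) :
    |(hemiHeight w)⁻¹ - (hemiHeight w')⁻¹| ≤ r / c ^ 3 * ‖w - w'‖ := by
  have hle := le_hemiHeight hrc hw
  have hle' := le_hemiHeight hrc hw'
  have hpos := hc.trans_le hle
  have hpos' := hc.trans_le hle'
  have hsub := abs_hemiHeight_sub_le hc hrc hw hw'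
  calc |(hemiHeight w)⁻¹ - (hemiHeight w')⁻¹|
      = |hemiHeight w - hemiHeight w'| / (hemiHeight w * hemiHeight w') := by
        rw [inv_sub_inv hpos.ne' hpos'.ne', abs_div, abs_sub_comm, abs_of_pos (mul_pos hpos hpos')]
    _ ≤ r / c * ‖w - w'‖ / (c * c) := by gcongr; exact (abs_nonneg _).trans hsub
    _ = r / c ^ 3 * ‖w - w'‖ := by ring

lemma norm_id_add_rankOne_gnomonic_le (hc : 0 < c) (hrc : r ^ 2 + c ^ 2 = 1) (hw : ‖w‖ ≤ r) :
    ‖ContinuousLinearMap.id ℝ E + InnerProductSpace.rankOne ℝ (gnomonic w) (gnomonic w)‖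
      ≤ 1 / c ^ 2 :=
  calc _ ≤ ‖ContinuousLinearMap.id ℝ E‖ + ‖gnomonic w‖ * ‖gnomonic w‖ := by
        rw [← InnerProductSpace.norm_rankOne (𝕜 := ℝ)]
        exact norm_add_le _ _
    _ ≤ 1 + r / c * (r / c) := by
        have hγ := norm_gnomonic_le hc hrc hw
        gcongr
        · exact ContinuousLinearMap.norm_id_le
        · exact (norm_nonneg _).trans hγ
    _ = 1 / c ^ 2 := by
        field_simp
        linarith

lemma norm_gnomonicDeriv_le (hc : 0 < c) (hrc : r ^ 2 + c ^ 2 = 1) (hw : ‖w‖ ≤ r) :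
    ‖gnomonicDeriv w‖ ≤ 1 / c ^ 3 :=
  calc ‖gnomonicDeriv w‖ ≤ 1 / c * (1 / c ^ 2) := by
        rw [gnomonicDeriv, norm_smul]
        exact mul_le_mul (abs_inv_hemiHeight_le hc hrc hw)
          (norm_id_add_rankOne_gnomonic_le hc hrc hw) (norm_nonneg _) (by positivity)
    _ = 1 / c ^ 3 := by ring

lemma norm_gnomonic_sub_le (hc : 0 < c) (hrc : r ^ 2 + c ^ 2 = 1) (hw : ‖w‖ ≤ r)
    (hw' : ‖w'‖ ≤ r) : ‖gnomonic w - gnomonic w'‖ ≤ 1 / c ^ 3 * ‖w - w'‖ :=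
  norm_sub_le_of_hasFDerivAt_of_norm_le
    (fun _ hv => hasFDerivAt_gnomonic (hv.trans_lt (lt_one_of_sq_add_sq_eq_one hc hrc)))
    (fun _ => norm_gnomonicDeriv_le hc hrc) hw hw'

lemma norm_rankOne_self_sub_le {u v : E} {B : ℝ} (hu : ‖u‖ ≤ B) (hv : ‖v‖ ≤ B) :
    ‖InnerProductSpace.rankOne ℝ u u - InnerProductSpace.rankOne ℝ v v‖ ≤ 2 * B * ‖u - v‖ := by
  have hsplit : InnerProductSpace.rankOne ℝ u u - InnerProductSpace.rankOne ℝ v v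
      = InnerProductSpace.rankOne ℝ (u - v) u + InnerProductSpace.rankOne ℝ v (u - v) := by
    ext e
    simp
  calc _ ≤ ‖u - v‖ * ‖u‖ + ‖v‖ * ‖u - v‖ := by
        rw [hsplit, ← InnerProductSpace.norm_rankOne (𝕜 := ℝ),
          ← InnerProductSpace.norm_rankOne (𝕜 := ℝ)]
        exact norm_add_le _ _
    _ ≤ ‖u - v‖ * B + B * ‖u - v‖ := by gcongr
    _ = 2 * B * ‖u - v‖ := by ring

lemma norm_gnomonicDeriv_sub_le (hc : 0 < c) (hrc : r ^ 2 + c ^ 2 = 1) (hw : ‖w‖ ≤ r)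
    (hw' : ‖w'‖ ≤ r) :
    ‖gnomonicDeriv w - gnomonicDeriv w'‖ ≤ 3 * r / c ^ 5 * ‖w - w'‖ := by
  have hr : 0 ≤ r := (norm_nonneg w).trans hw
  have hrank : ‖(ContinuousLinearMap.id ℝ E +
        InnerProductSpace.rankOne ℝ (gnomonic w) (gnomonic w)) -
      (ContinuousLinearMap.id ℝ E + InnerProductSpace.rankOne ℝ (gnomonic w') (gnomonic w'))‖
      ≤ 2 * (r / c) * (1 / c ^ 3) * ‖w - w'‖ := by
    rw [add_sub_add_left_eq_sub, mul_assoc]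
    refine (norm_rankOne_self_sub_le (norm_gnomonic_le hc hrc hw)
      (norm_gnomonic_le hc hrc hw')).trans ?_
    gcongr
    exact norm_gnomonic_sub_le hc hrc hw hw'
  refine (norm_smul_sub_smul_le (abs_inv_hemiHeight_le hc hrc hw')
    (norm_id_add_rankOne_gnomonic_le hc hrc hw) (abs_inv_hemiHeight_sub_le hc hrc hw hw')
    hrank).trans_eq ?_
  field_simp
  ring

end Hemisphere

section Sample

variable {E : Type*} [NormedAddCommGroup E] [InnerProductSpace ℝ E]

/-- The inner product `q(w)ᵀ y` of the hemisphere point above `w` with the sample `y = (x, b)`. -/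
def hemiInner (x : E) (b : ℝ) (w : E) : ℝ := inner ℝ x w + b * hemiHeight w

/-- The gradient `x - b γ(w)` of `hemiInner x b`. -/
def hemiInnerGrad (x : E) (b : ℝ) (w : E) : E := x - b • gnomonic w

/-- The gradient in `w` of the one-sample objective `h_μ(q(w)ᵀ y)`, `y = (x, b)`. -/
def sampleGrad (μ : ℝ) (x : E) (b : ℝ) (w : E) : E :=
  hmuDeriv μ (hemiInner x b w) • hemiInnerGrad x b w

/-- The Hessian in `w` of the one-sample objective `h_μ(q(w)ᵀ y)`, `y = (x, b)`. -/
def sampleHess (μ : ℝ) (x : E) (b : ℝ) (w : E) : E →L[ℝ] E :=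
  hmuDeriv2 μ (hemiInner x b w) •
      InnerProductSpace.rankOne ℝ (hemiInnerGrad x b w) (hemiInnerGrad x b w)
    - (hmuDeriv μ (hemiInner x b w) * b) • gnomonicDeriv w

variable {w w' : E} {μ r c : ℝ}

lemma hasFDerivAt_hemiInner (x : E) (b : ℝ) (hw : ‖w‖ < 1) :
    HasFDerivAt (hemiInner x b) (innerSL ℝ (hemiInnerGrad x b w)) w := by
  refine ((innerSL ℝ x).hasFDerivAt.add ((hasFDerivAt_hemiHeight hw).const_mul b)).congr_fderiv ?_
  ext e
  simp [hemiInnerGrad, sub_eq_add_neg]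

lemma hasFDerivAt_hmu_hemiInner (hμ : μ ≠ 0) (x : E) (b : ℝ) (hw : ‖w‖ < 1) :
    HasFDerivAt (fun v => hmu μ (hemiInner x b v)) (innerSL ℝ (sampleGrad μ x b w)) w := by
  refine ((hasDerivAt_hmu hμ _).comp_hasFDerivAt w (hasFDerivAt_hemiInner x b hw)).congr_fderiv ?_
  ext e
  simp [sampleGrad]

lemma hasFDerivAt_sampleGrad (μ : ℝ) (x : E) (b : ℝ) (hw : ‖w‖ < 1) :
    HasFDerivAt (sampleGrad μ x b) (sampleHess μ x b w) w := by
  have hslope := (hasDerivAt_hmuDeriv μ _).comp_hasFDerivAt w (hasFDerivAt_hemiInner x b hw)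
  have hgrad : HasFDerivAt (hemiInnerGrad x b) (-(b • gnomonicDeriv w)) w :=
    ((hasFDerivAt_gnomonic hw).const_smul b).const_sub x
  refine (hslope.smul hgrad).congr_fderiv ?_
  ext1 e
  simp only [sampleHess, Function.comp, _root_.add_apply, _root_.sub_apply, _root_.smul_apply,
    ContinuousLinearMap.smulRight_apply, _root_.neg_apply, innerSL_apply_apply,
    InnerProductSpace.rankOne_apply, smul_eq_mul]
  module

lemma norm_hemiInnerGrad_le (hc : 0 < c) (hrc : r ^ 2 + c ^ 2 = 1) (x : E) (b : ℝ)
    (hw : ‖w‖ ≤ r) : ‖hemiInnerGrad x b w‖ ≤ √(‖x‖ ^ 2 + b ^ 2) / c := by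
  have hcauchy : c * ‖x‖ + r * |b| ≤ √(‖x‖ ^ 2 + b ^ 2) := by
    refine Real.le_sqrt_of_sq_le ?_
    rw [← sq_abs b]
    linear_combination (‖x‖ ^ 2 + |b| ^ 2) * hrc + sq_nonneg (r * ‖x‖ - c * |b|)
  calc ‖hemiInnerGrad x b w‖ ≤ ‖x‖ + |b| * ‖gnomonic w‖ := by
        rw [← Real.norm_eq_abs, ← norm_smul]
        exact norm_sub_le _ _
    _ ≤ ‖x‖ + |b| * (r / c) := by
        gcongr
        exact norm_gnomonic_le hc hrc hw
    _ = (c * ‖x‖ + r * |b|) / c := by field_simp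
    _ ≤ √(‖x‖ ^ 2 + b ^ 2) / c := by gcongr

lemma abs_hemiInner_sub_le (hc : 0 < c) (hrc : r ^ 2 + c ^ 2 = 1) (x : E) (b : ℝ)
    (hw : ‖w‖ ≤ r) (hw' : ‖w'‖ ≤ r) :
    |hemiInner x b w - hemiInner x b w'| ≤ √(‖x‖ ^ 2 + b ^ 2) / c * ‖w - w'‖ :=
  norm_sub_le_of_hasFDerivAt_of_norm_le
    (fun _ hv => hasFDerivAt_hemiInner x b (hv.trans_lt (lt_one_of_sq_add_sq_eq_one hc hrc)))
    (fun _ hv => by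
      rw [innerSL_apply_norm]
      exact norm_hemiInnerGrad_le hc hrc x b hv) hw hw'

lemma norm_hemiInnerGrad_sub_le (hc : 0 < c) (hrc : r ^ 2 + c ^ 2 = 1) (x : E) (b : ℝ)
    (hw : ‖w‖ ≤ r) (hw' : ‖w'‖ ≤ r) :
    ‖hemiInnerGrad x b w - hemiInnerGrad x b w'‖ ≤ |b| / c ^ 3 * ‖w - w'‖ :=
  calc ‖hemiInnerGrad x b w - hemiInnerGrad x b w'‖ = |b| * ‖gnomonic w - gnomonic w'‖ := by
        rw [hemiInnerGrad, hemiInnerGrad, sub_sub_sub_cancel_left, ← smul_sub, norm_smul,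
          Real.norm_eq_abs, norm_sub_rev]
    _ ≤ |b| * (1 / c ^ 3 * ‖w - w'‖) := by
        gcongr
        exact norm_gnomonic_sub_le hc hrc hw hw'
    _ = |b| / c ^ 3 * ‖w - w'‖ := by ring

lemma norm_hmuDeriv2_smul_rankOne_sub_le (hμ : 0 < μ) (hc : 0 < c) (hrc : r ^ 2 + c ^ 2 = 1)
    (x : E) (b : ℝ) (hw : ‖w‖ ≤ r) (hw' : ‖w'‖ ≤ r) :
    ‖hmuDeriv2 μ (hemiInner x b w) •
          InnerProductSpace.rankOne ℝ (hemiInnerGrad x b w) (hemiInnerGrad x b w)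
        - hmuDeriv2 μ (hemiInner x b w') •
          InnerProductSpace.rankOne ℝ (hemiInnerGrad x b w') (hemiInnerGrad x b w')‖
      ≤ (2 * √(‖x‖ ^ 2 + b ^ 2) ^ 3 / (μ ^ 2 * c ^ 3)
        + 2 * √(‖x‖ ^ 2 + b ^ 2) * |b| / (μ * c ^ 4)) * ‖w - w'‖ := by
  set ρ := √(‖x‖ ^ 2 + b ^ 2)
  set v := hemiInnerGrad x b w
  set v' := hemiInnerGrad x b w'
  have hv : ‖v‖ ≤ ρ / c := norm_hemiInnerGrad_le hc hrc x b hw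
  have hv' : ‖v'‖ ≤ ρ / c := norm_hemiInnerGrad_le hc hrc x b hw'
  have hcurv : |hmuDeriv2 μ (hemiInner x b w) - hmuDeriv2 μ (hemiInner x b w')|
      ≤ 2 / μ ^ 2 * (ρ / c) * ‖w - w'‖ := by
    refine (abs_hmuDeriv2_sub_le hμ _ _).trans ?_
    rw [mul_assoc]
    gcongr
    exact abs_hemiInner_sub_le hc hrc x b hw hw'
  have hrank : ‖InnerProductSpace.rankOne ℝ v v‖ ≤ ρ / c * (ρ / c) := by
    rw [InnerProductSpace.norm_rankOne]
    gcongr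
  have hrank_sub : ‖InnerProductSpace.rankOne ℝ v v - InnerProductSpace.rankOne ℝ v' v'‖
      ≤ 2 * (ρ / c) * (|b| / c ^ 3) * ‖w - w'‖ := by
    refine (norm_rankOne_self_sub_le hv hv').trans ?_
    rw [mul_assoc _ (|b| / c ^ 3)]
    gcongr
    exact norm_hemiInnerGrad_sub_le hc hrc x b hw hw'
  refine (norm_smul_sub_smul_le (abs_hmuDeriv2_le hμ _) hrank hcurv hrank_sub).trans_eq ?_
  field_simp

lemma norm_hmuDeriv_mul_smul_gnomonicDeriv_sub_le (hμ : 0 < μ) (hc : 0 < c)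
    (hrc : r ^ 2 + c ^ 2 = 1) (x : E) (b : ℝ) (hw : ‖w‖ ≤ r) (hw' : ‖w'‖ ≤ r) :
    ‖(hmuDeriv μ (hemiInner x b w) * b) • gnomonicDeriv w
        - (hmuDeriv μ (hemiInner x b w') * b) • gnomonicDeriv w'‖
      ≤ (√(‖x‖ ^ 2 + b ^ 2) * |b| / (μ * c ^ 4) + 3 * r * |b| / c ^ 5) * ‖w - w'‖ := by
  set ρ := √(‖x‖ ^ 2 + b ^ 2)
  have hslope : |hmuDeriv μ (hemiInner x b w') * b| ≤ |b| := by
    rw [abs_mul]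
    exact mul_le_of_le_one_left (abs_nonneg b) (abs_hmuDeriv_le_one μ _)
  have hslope_sub : |hmuDeriv μ (hemiInner x b w) * b - hmuDeriv μ (hemiInner x b w') * b|
      ≤ 1 / μ * (ρ / c) * |b| * ‖w - w'‖ := by
    rw [← sub_mul, abs_mul, mul_right_comm]
    gcongr
    refine (abs_hmuDeriv_sub_le hμ _ _).trans ?_
    rw [mul_assoc]
    gcongr
    exact abs_hemiInner_sub_le hc hrc x b hw hw'
  refine (norm_smul_sub_smul_le hslope (norm_gnomonicDeriv_le hc hrc hw) hslope_sub
    (norm_gnomonicDeriv_sub_le hc hrc hw hw')).trans_eq ?_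
  field_simp

lemma norm_sampleHess_sub_le (hμ : 0 < μ) (hc : 0 < c) (hrc : r ^ 2 + c ^ 2 = 1)
    (x : E) (b : ℝ) (hw : ‖w‖ ≤ r) (hw' : ‖w'‖ ≤ r) :
    ‖sampleHess μ x b w - sampleHess μ x b w'‖
      ≤ (2 * √(‖x‖ ^ 2 + b ^ 2) ^ 3 / (μ ^ 2 * c ^ 3)
        + 3 * √(‖x‖ ^ 2 + b ^ 2) * |b| / (μ * c ^ 4) + 3 * r * |b| / c ^ 5) * ‖w - w'‖ := by
  rw [sampleHess, sampleHess, sub_sub_sub_comm]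
  refine (norm_sub_le_of_le (norm_hmuDeriv2_smul_rankOne_sub_le hμ hc hrc x b hw hw')
    (norm_hmuDeriv_mul_smul_gnomonicDeriv_sub_le hμ hc hrc x b hw hw')).trans_eq ?_
  ring

end Sample

section Columns

lemma abs_le_Minf {m k : ℕ} (M : Matrix (Fin m) (Fin k) ℝ) (i : Fin m) (j : Fin k) :
    |M i j| ≤ Minf M :=
  (le_ciSup (f := fun j => |M i j|) (Set.finite_range _).bddAbove j).trans
    (le_ciSup (f := fun i => ⨆ j, |M i j|) (Set.finite_range _).bddAbove i)

lemma Minf_nonneg {m k : ℕ} (M : Matrix (Fin m) (Fin k) ℝ) : 0 ≤ Minf M :=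
  Real.iSup_nonneg fun _ => Real.iSup_nonneg fun _ => abs_nonneg _

variable {m p : ℕ}

/-- The first `m` coordinates of the `k`-th column of `Y`, the part `x` of the sample `(x, b)`. -/
def colHead (Y : Matrix (Fin (m + 1)) (Fin p) ℝ) (k : Fin p) : EuclideanSpace ℝ (Fin m) :=
  WithLp.toLp 2 fun i => Y i.castSucc k

lemma sqrt_norm_colHead_sq_add_sq_le (Y : Matrix (Fin (m + 1)) (Fin p) ℝ) (k : Fin p) :
    √(‖colHead Y k‖ ^ 2 + Y (Fin.last m) k ^ 2) ≤ √((m + 1 : ℕ) : ℝ) * Minf Y := by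
  refine Real.sqrt_le_iff.2 ⟨mul_nonneg (Real.sqrt_nonneg _) (Minf_nonneg Y), ?_⟩
  calc ‖colHead Y k‖ ^ 2 + Y (Fin.last m) k ^ 2 = ∑ i, Y i k ^ 2 := by
        simp [EuclideanSpace.norm_sq_eq, colHead, Fin.sum_univ_castSucc]
    _ ≤ ∑ _i : Fin (m + 1), Minf Y ^ 2 :=
        Finset.sum_le_sum fun i _ => sq_le_sq' (neg_le_of_abs_le (abs_le_Minf Y i k))
          (le_of_abs_le (abs_le_Minf Y i k))
    _ = (√((m + 1 : ℕ) : ℝ) * Minf Y) ^ 2 := by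
        rw [mul_pow, Real.sq_sqrt (Nat.cast_nonneg _)]
        simp

lemma gfun_succ_eq (p : ℕ) (μ : ℝ) (Y : Matrix (Fin (m + 1)) (Fin p) ℝ)
    (w : EuclideanSpace ℝ (Fin m)) :
    gfun (m + 1) p μ Y w
      = (p : ℝ)⁻¹ * ∑ k : Fin p, hmu μ (hemiInner (colHead Y k) (Y (Fin.last m) k) w) := by
  rw [gfun]
  congr 1
  refine Finset.sum_congr rfl fun k _ => congrArg _ ?_
  rw [Fin.sum_univ_castSucc, hemiInner, PiLp.inner_apply]
  congr 1
  · exact Finset.sum_congr rfl fun i _ => by simp [qmap, colHead]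
  · simp [qmap, hemiHeight, mul_comm]

variable {μ : ℝ} {w w' : EuclideanSpace ℝ (Fin m)}

lemma gradg_succ_eq (hμ : μ ≠ 0) (Y : Matrix (Fin (m + 1)) (Fin p) ℝ) (hw : ‖w‖ < 1) :
    gradg (m + 1) p μ Y w
      = (p : ℝ)⁻¹ • ∑ k : Fin p, sampleGrad μ (colHead Y k) (Y (Fin.last m) k) w := by
  have hsum := (HasFDerivAt.fun_sum (u := Finset.univ) fun k _ =>
    hasFDerivAt_hmu_hemiInner hμ (colHead Y k) (Y (Fin.last m) k) hw).const_mul (p : ℝ)⁻¹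
  refine HasGradientAt.gradient (hasGradientAt_iff_hasFDerivAt.2 ?_)
  rw [show gfun (m + 1) p μ Y = _ from funext (gfun_succ_eq p μ Y)]
  refine hsum.congr_fderiv ?_
  rw [← map_sum, ← map_smul]
  rfl

lemma hessg_succ_eq (hμ : μ ≠ 0) (Y : Matrix (Fin (m + 1)) (Fin p) ℝ) (hw : ‖w‖ < 1) :
    hessg (m + 1) p μ Y w
      = (p : ℝ)⁻¹ • ∑ k : Fin p, sampleHess μ (colHead Y k) (Y (Fin.last m) k) w := by
  have hsum := (HasFDerivAt.fun_sum (u := Finset.univ) fun k _ =>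
    hasFDerivAt_sampleGrad μ (colHead Y k) (Y (Fin.last m) k) hw).const_smul (p : ℝ)⁻¹
  refine (hsum.congr_of_eventuallyEq ?_).fderiv
  filter_upwards [(isOpen_lt continuous_norm continuous_const).mem_nhds hw] with v hv
  exact gradg_succ_eq hμ Y hv

lemma hessg_succ_sub_eq (hμ : μ ≠ 0) (Y : Matrix (Fin (m + 1)) (Fin p) ℝ) (hw : ‖w‖ < 1)
    (hw' : ‖w'‖ < 1) :
    hessg (m + 1) p μ Y w - hessg (m + 1) p μ Y w'
      = (p : ℝ)⁻¹ • ∑ k : Fin p, (sampleHess μ (colHead Y k) (Y (Fin.last m) k) w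
        - sampleHess μ (colHead Y k) (Y (Fin.last m) k) w') := by
  rw [Finset.sum_sub_distrib, smul_sub, ← hessg_succ_eq hμ Y hw, ← hessg_succ_eq hμ Y hw']

lemma norm_sampleHess_colHead_sub_le {r c : ℝ} (hμ : 0 < μ) (hc : 0 < c)
    (hrc : r ^ 2 + c ^ 2 = 1) (Y : Matrix (Fin (m + 1)) (Fin p) ℝ) (k : Fin p) (hw : ‖w‖ ≤ r)
    (hw' : ‖w'‖ ≤ r) :
    ‖sampleHess μ (colHead Y k) (Y (Fin.last m) k) w
        - sampleHess μ (colHead Y k) (Y (Fin.last m) k) w'‖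
      ≤ (2 * √((m + 1 : ℕ) : ℝ) ^ 3 / (μ ^ 2 * c ^ 3) * Minf Y ^ 3
        + 3 * √((m + 1 : ℕ) : ℝ) / (μ * c ^ 4) * Minf Y ^ 2
        + 3 * r / c ^ 5 * Minf Y) * ‖w - w'‖ := by
  have hr : 0 ≤ r := (norm_nonneg w).trans hw
  have hM := Minf_nonneg Y
  have hcol := sqrt_norm_colHead_sq_add_sq_le Y k
  have hlast := abs_le_Minf Y (Fin.last m) k
  refine (norm_sampleHess_sub_le hμ hc hrc _ _ hw hw').trans ?_
  calc _ ≤ (2 * (√((m + 1 : ℕ) : ℝ) * Minf Y) ^ 3 / (μ ^ 2 * c ^ 3)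
        + 3 * (√((m + 1 : ℕ) : ℝ) * Minf Y) * Minf Y / (μ * c ^ 4)
        + 3 * r * Minf Y / c ^ 5) * ‖w - w'‖ := by gcongr
    _ = _ := by ring

end Columns

theorem statement12_general (n p : ℕ) (μ r c : ℝ) (hμ : 0 < μ) (hc : 0 < c)
    (hrc : r ^ 2 + c ^ 2 = 1) (X₀ : Matrix (Fin n) (Fin p) ℝ)
    (w w' : EuclideanSpace ℝ (Fin (n - 1))) (hw : ‖w‖ ≤ r) (hw' : ‖w'‖ ≤ r) :
    ‖hessg n p μ X₀ w - hessg n p μ X₀ w'‖ ≤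
      (2 * √n ^ 3 / (μ ^ 2 * c ^ 3) * Minf X₀ ^ 3 + 3 * √n / (μ * c ^ 4) * Minf X₀ ^ 2 +
        3 * r / c ^ 5 * Minf X₀) * ‖w - w'‖ := by
  have hr : 0 ≤ r := (norm_nonneg w).trans hw
  have hr1 : r < 1 := lt_one_of_sq_add_sq_eq_one hc hrc
  have hM := Minf_nonneg X₀
  rcases n with _ | m
  · have : w = w' := Subsingleton.elim (α := EuclideanSpace ℝ (Fin 0)) w w'
    simp [this]
  · refine (congrArg norm (hessg_succ_sub_eq hμ.ne' X₀ (hw.trans_lt hr1)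
      (hw'.trans_lt hr1))).trans_le (norm_inv_smul_sum_le (by positivity) fun k => ?_)
    exact norm_sampleHess_colHead_sub_le hμ hc hrc X₀ k hw hw'

lemma lipschitz_constant_three_fifths_le (n : ℕ) {μ M : ℝ} (hμ : 0 < μ) (hM : 0 ≤ M) :
    2 * √n ^ 3 / (μ ^ 2 * (4 / 5) ^ 3) * M ^ 3 + 3 * √n / (μ * (4 / 5) ^ 4) * M ^ 2
        + 3 * (3 / 5) / (4 / 5) ^ 5 * M
      ≤ 4 * (n : ℝ) ^ 2 / μ ^ 2 * M ^ 3 + 4 * (n : ℝ) / μ * M ^ 2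
        + 8 * √2 * √n / μ * M ^ 2 + 8 * M := by
  have hsqrt_cube : √(n : ℝ) ^ 3 ≤ (n : ℝ) ^ 2 := by
    rcases n.eq_zero_or_pos with rfl | hn
    · simp
    · calc √(n : ℝ) ^ 3 ≤ √(n : ℝ) ^ 4 :=
            pow_le_pow_right₀ (Real.one_le_sqrt.2 (by exact_mod_cast hn)) (by norm_num)
        _ = (√(n : ℝ) ^ 2) ^ 2 := by ring
        _ = (n : ℝ) ^ 2 := by rw [Real.sq_sqrt (Nat.cast_nonneg n)]
  have hcubic : 2 * √n ^ 3 / (μ ^ 2 * (4 / 5) ^ 3) * M ^ 3 ≤ 4 * (n : ℝ) ^ 2 / μ ^ 2 * M ^ 3 :=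
    calc _ = 125 / 32 * √n ^ 3 * (M ^ 3 / μ ^ 2) := by ring
      _ ≤ 4 * (n : ℝ) ^ 2 * (M ^ 3 / μ ^ 2) := by gcongr; norm_num
      _ = _ := by ring
  have hquadratic : 3 * √n / (μ * (4 / 5) ^ 4) * M ^ 2 ≤ 8 * √2 * √n / μ * M ^ 2 :=
    calc _ = 1875 / 256 * √n * (M ^ 2 / μ) := by ring
      _ ≤ 8 * √2 * √n * (M ^ 2 / μ) := by
        gcongr
        linarith [Real.one_le_sqrt.2 one_le_two]
      _ = _ := by ring
  have hdropped : 0 ≤ 4 * (n : ℝ) / μ * M ^ 2 := by positivity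
  linarith

/-- Proposition: Lipschitz property of the Hessian near zero,
in the spectral norm. -/
theorem statement12 (n p : ℕ) (μ r : ℝ) (hμ : 0 < μ) (hr : r ∈ Set.Ioo (0 : ℝ) (1 / 2))
    (X₀ : Matrix (Fin n) (Fin p) ℝ) :
    ∀ w ∈ GammaSet n ∩ {w | ‖w‖ ≤ r}, ∀ w' ∈ GammaSet n ∩ {w | ‖w‖ ≤ r},
      ‖hessg n p μ X₀ w - hessg n p μ X₀ w'‖ ≤
        (4 * (n : ℝ) ^ 2 / μ ^ 2 * Minf X₀ ^ 3 +
         4 * (n : ℝ) / μ * Minf X₀ ^ 2 +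
         8 * Real.sqrt 2 * Real.sqrt n / μ * Minf X₀ ^ 2 +
         8 * Minf X₀) * ‖w - w'‖ := by
  rintro w ⟨-, hw⟩ w' ⟨-, hw'⟩
  have hr' : r ≤ 3 / 5 := hr.2.le.trans (by norm_num)
  exact (statement12_general n p μ (3 / 5) (4 / 5) hμ (by norm_num) (by norm_num) X₀ w w'
    (hw.trans hr') (hw'.trans hr')).trans (mul_le_mul_of_nonneg_right
      (lipschitz_constant_three_fifths_le n hμ (Minf_nonneg X₀)) (norm_nonneg _))

end
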